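/- arXiv:2601.07804 — 4 statements merged into one kernel-verified Lean document; each statement's English description precedes it below -/
import Mathlib

section
/- Let F be the local Hutchinson–Barnsley operator of a local IFS on a compact metric space X. Suppose A_0 ⊆ X is compact and F-positively invariant, and that F^i(A_0) ≠ ∅ for every i ≥ 0. Then A' := ⋂_{i ≥ 0} F^i(A_0) is a nonempty compact subset of X and F(A') = A'. -/
/-!
The iterates of `A₀` decrease and are compact, so Cantor's intersection theorem makes their
intersection nonempty. For its invariance, the operator preserves intersections of decreasing
families of compact sets: images do because the fibres of `f` over a point form a decreasing
family of compact sets, and a finite union commutes with a decreasing intersection. Applying the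
operator to the sequence of iterates merely shifts it, which does not change its intersection.
-/

open Set Function

theorem image_iInter_eq_of_directed_isCompact {X Y κ : Type*} [TopologicalSpace X] [T2Space X]
    [TopologicalSpace Y] [T1Space Y] [Nonempty κ] {f : X → Y} {K : κ → Set X}
    (hdir : Directed (· ⊇ ·) K) (hK : ∀ i, IsCompact (K i)) (hf : ∀ i, ContinuousOn f (K i)) :
    f '' ⋂ i, K i = ⋂ i, f '' K i := by
  refine (image_iInter_subset K f).antisymm fun y hy ↦ ?_
  have fiber_closed (i : κ) : IsClosed (K i ∩ f ⁻¹' {y}) :=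
    (hf i).preimage_isClosed_of_isClosed (hK i).isClosed isClosed_singleton
  have fiber_compact (i : κ) : IsCompact (K i ∩ f ⁻¹' {y}) :=
    (hK i).of_isClosed_subset (fiber_closed i) inter_subset_left
  have fiber_directed : Directed (· ⊇ ·) fun i ↦ K i ∩ f ⁻¹' {y} :=
    hdir.mono_comp (g := (· ∩ f ⁻¹' {y})) _ fun _ _ ↦ inter_subset_inter_left _
  obtain ⟨x, hx⟩ := IsCompact.nonempty_iInter_of_directed_nonempty_isCompact_isClosed _
    fiber_directed (mem_iInter.1 hy) fiber_compact fiber_closed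
  rw [← iInter_inter] at hx
  exact ⟨x, hx⟩

theorem isFixedPt_iInf_iterate {α : Type*} [CompleteLattice α] {F : α → α} {a : α} (ha : F a ≤ a)
    (hF : F (⨅ i : ℕ, F^[i] a) = ⨅ i : ℕ, F (F^[i] a)) : IsFixedPt F (⨅ i : ℕ, F^[i] a) := by
  have shift_le : ⨅ i : ℕ, F^[i + 1] a ≤ a := (iInf_le _ 0).trans ha
  calc F (⨅ i : ℕ, F^[i] a)
    _ = ⨅ i : ℕ, F^[i + 1] a := by simp only [hF, iterate_succ_apply']
    _ = a ⊓ ⨅ i : ℕ, F^[i + 1] a := (inf_eq_right.2 shift_le).symm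
    _ = ⨅ i : ℕ, F^[i] a := inf_iInf_nat_succ fun i ↦ F^[i] a

/-- The local Hutchinson–Barnsley operator of the maps `f j` restricted to the domains `D j`.
Each `f j` is a total function, but its values outside `D j` do not enter. -/
def localHutchinson {X ι : Type*} (D : ι → Set X) (f : ι → X → X) (B : Set X) : Set X :=
  ⋃ j, f j '' (B ∩ D j)

namespace localHutchinson

variable {X ι : Type*} {D : ι → Set X} {f : ι → X → X} {A : Set X}

theorem monotone : Monotone (localHutchinson D f) := fun _ _ hBC ↦
  iUnion_mono fun _ ↦ image_mono (inter_subset_inter_left _ hBC)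

theorem antitone_iterate (hA : localHutchinson D f A ⊆ A) :
    Antitone fun i : ℕ ↦ (localHutchinson D f)^[i] A :=
  monotone.antitone_iterate_of_map_le hA

variable [TopologicalSpace X] [Finite ι]

theorem isCompact (hD : ∀ j, IsClosed (D j)) (hf : ∀ j, ContinuousOn (f j) (D j))
    (hA : IsCompact A) : IsCompact (localHutchinson D f A) :=
  isCompact_iUnion fun j ↦
    (hA.inter_right (hD j)).image_of_continuousOn ((hf j).mono inter_subset_right)

theorem isCompact_iterate (hD : ∀ j, IsClosed (D j)) (hf : ∀ j, ContinuousOn (f j) (D j))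
    (hA : IsCompact A) (i : ℕ) : IsCompact ((localHutchinson D f)^[i] A) := by
  induction i with
  | zero => exact hA
  | succ i ih => exact iterate_succ_apply' (localHutchinson D f) i A ▸ isCompact hD hf ih

theorem iInter_eq_of_antitone_isCompact [T2Space X] {κ : Type*} [Preorder κ]
    [IsDirectedOrder κ] [Nonempty κ] (hD : ∀ j, IsClosed (D j))
    (hf : ∀ j, ContinuousOn (f j) (D j)) {K : κ → Set X} (hanti : Antitone K)
    (hK : ∀ i, IsCompact (K i)) :
    localHutchinson D f (⋂ i, K i) = ⋂ i, localHutchinson D f (K i) := by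
  have antitone_inter (j : ι) : Antitone fun i ↦ K i ∩ D j := fun _ _ h ↦
    inter_subset_inter_left _ (hanti h)
  calc ⋃ j, f j '' ((⋂ i, K i) ∩ D j)
    _ = ⋃ j, ⋂ i, f j '' (K i ∩ D j) := iUnion_congr fun j ↦ by
      rw [iInter_inter]
      exact image_iInter_eq_of_directed_isCompact (antitone_inter j).directed_ge
        (fun i ↦ (hK i).inter_right (hD j)) fun i ↦ (hf j).mono inter_subset_right
    _ = ⋂ i, ⋃ j, f j '' (K i ∩ D j) :=
      (iInter_iUnion_of_antitone (s := fun j i ↦ f j '' (K i ∩ D j)) fun j _ _ h ↦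
        image_mono (antitone_inter j h)).symm

end localHutchinson

theorem sequential_local_attractor_general {X ι : Type*} [TopologicalSpace X] [T2Space X]
    [Finite ι] {D : ι → Set X} (hD : ∀ j, IsClosed (D j)) {f : ι → X → X}
    (hf : ∀ j, ContinuousOn (f j) (D j)) {A : Set X} (hA : IsCompact A)
    (hinv : localHutchinson D f A ⊆ A)
    (hne : ∀ i : ℕ, ((localHutchinson D f)^[i] A).Nonempty) :
    (⋂ i : ℕ, (localHutchinson D f)^[i] A).Nonempty ∧
      IsCompact (⋂ i : ℕ, (localHutchinson D f)^[i] A) ∧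
      localHutchinson D f (⋂ i : ℕ, (localHutchinson D f)^[i] A) =
        ⋂ i : ℕ, (localHutchinson D f)^[i] A := by
  have hanti := localHutchinson.antitone_iterate hinv
  have hcompact := localHutchinson.isCompact_iterate hD hf hA
  have hclosed (i : ℕ) := (hcompact i).isClosed
  refine ⟨?nonempty, ?compact, ?invariant⟩
  case nonempty =>
    exact IsCompact.nonempty_iInter_of_directed_nonempty_isCompact_isClosed _
      hanti.directed_ge hne hcompact hclosed
  case compact =>
    exact hA.of_isClosed_subset (isClosed_iInter hclosed) (iInter_subset _ 0)
  case invariant =>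
    exact isFixedPt_iInf_iterate hinv
      (localHutchinson.iInter_eq_of_antitone_isCompact hD hf hanti hcompact)

/-- If `A₀` is a compact, `F`-positively invariant set whose iterates
`F^[i] A₀` are all nonempty, then `A' = ⋂ i, F^[i] A₀` is a nonempty compact set with
`F A' = A'`, where `F` is the local Hutchinson–Barnsley operator of a local IFS. -/
theorem sequential_local_attractor {X : Type*} [MetricSpace X] [CompactSpace X]
    {n : ℕ} (hn : 0 < n)
    (Xs : Fin n → Set X) (hXs : ∀ j, IsClosed (Xs j))
    (f : Fin n → X → X) (hf : ∀ j, ContinuousOn (f j) (Xs j))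
    (F : Set X → Set X) (hF : ∀ B, F B = ⋃ j, f j '' (B ∩ Xs j))
    (A₀ : Set X) (hA₀ : IsCompact A₀) (hinv : F A₀ ⊆ A₀)
    (hne : ∀ i : ℕ, (F^[i] A₀).Nonempty) :
    (⋂ i : ℕ, F^[i] A₀).Nonempty ∧ IsCompact (⋂ i : ℕ, F^[i] A₀) ∧
      F (⋂ i : ℕ, F^[i] A₀) = ⋂ i : ℕ, F^[i] A₀ := by
  obtain rfl : F = localHutchinson Xs f := funext hF
  exact sequential_local_attractor_general hXs hf hA₀ hinv hne
end

section
/- Let F be the local Hutchinson–Barnsley operator of a local IFS on a compact metric space X with local attractor A := ⋃{B ⊆ X : F(B) = B}, and assume A ≠ ∅. Then the sets F^i(X) are nonempty and compact for every i ≥ 0, and they converge to A in the Hausdorff distance: hausdorffDist(F^i(X), A) → 0 as i → ∞. -/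
open Filter

/-!
A local Hutchinson–Barnsley operator is the image map of the closed relation `R ⊆ X × X` formed by
the graphs of the maps `f j` over the sets `X_j`. As `R` is closed, its image map sends compact sets
to closed sets and commutes with intersections of decreasing sequences of compact sets, so it fixes
`⋂ i, R^i(X)`. By monotonicity this intersection contains every fixed set, hence is the attractor,
and in a compact space the distance from a decreasing sequence of closed sets to its intersection
tends to `0`.
-/

open Function Metric Set

theorem sSup_fixedPoints_eq_iInf_iterate_top {α : Type*} [CompleteLattice α] {f : α → α}
    (hf : Monotone f) (hfix : IsFixedPt f (⨅ i, f^[i] ⊤)) :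
    sSup (fixedPoints f) = ⨅ i, f^[i] ⊤ := by
  refine le_antisymm (sSup_le fun x hx ↦ le_iInf fun i ↦ ?_) (le_sSup hfix)
  calc x = f^[i] x := (hx.iterate i).symm
    _ ≤ f^[i] ⊤ := hf.iterate i le_top

theorem tendsto_hausdorffEDist_iInter {ι X : Type*} [Preorder ι] [IsDirectedOrder ι] [Nonempty ι]
    [PseudoEMetricSpace X] {K : ι → Set X} (hK : Antitone K) (hcompact : ∀ i, IsCompact (K i))
    (hclosed : ∀ i, IsClosed (K i)) :
    Tendsto (fun i ↦ hausdorffEDist (K i) (⋂ i, K i)) atTop (nhds 0) := by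
  refine ENNReal.tendsto_nhds_zero.2 fun ε hε ↦ ?_
  have hopen : IsOpen {x | infEDist x (⋂ i, K i) < ε} :=
    isOpen_lt continuous_infEDist continuous_const
  obtain ⟨N, hN⟩ : ∃ N, K N ⊆ {x | infEDist x (⋂ i, K i) < ε} :=
    exists_subset_nhds_of_isCompact' hK.directed_ge hcompact hclosed fun x hx ↦
      hopen.mem_nhds <| (infEDist_zero_of_mem hx).trans_lt hε
  filter_upwards [eventually_ge_atTop N] with i hi
  refine hausdorffEDist_le_of_infEDist (fun x hx ↦ (hN (hK hi hx)).le) fun x hx ↦ ?_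
  exact (infEDist_zero_of_mem (mem_iInter.1 hx i)).trans_le zero_le

theorem antitone_iterate_relImage_univ {X : Type*} (R : SetRel X X) :
    Antitone fun i ↦ R.image^[i] univ :=
  R.image_mono.antitone_iterate_of_map_le (subset_univ _)

section ClosedRelation

variable {X Y : Type*} [TopologicalSpace X]

theorem isClosed_relImage [TopologicalSpace Y] {R : SetRel X Y} (hR : IsClosed R) {s : Set X}
    (hs : IsCompact s) : IsClosed (R.image s) := by
  have : CompactSpace s := isCompact_iff_compactSpace.1 hs
  have himage : R.image s = Prod.snd '' (Prod.map ((↑) : s → X) id ⁻¹' R) := by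
    ext y
    simp
  rw [himage]
  exact isClosedMap_snd_of_compactSpace _
    (hR.preimage (continuous_subtype_val.prodMap continuous_id))

theorem isClosed_relPreimage_singleton [TopologicalSpace Y] {R : SetRel X Y} (hR : IsClosed R)
    (y : Y) : IsClosed (R.preimage {y}) := by
  have hpreimage : R.preimage {y} = (·, y) ⁻¹' R := by
    ext x
    simp
  rw [hpreimage]
  exact hR.preimage (Continuous.prodMk_left y)

theorem relImage_iInter_of_directed {ι : Type*} [Nonempty ι] {R : SetRel X Y}
    (hR : ∀ y, IsClosed (R.preimage {y})) {K : ι → Set X} (hK : Directed (· ⊇ ·) K)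
    (hcompact : ∀ i, IsCompact (K i)) (hclosed : ∀ i, IsClosed (K i)) :
    R.image (⋂ i, K i) = ⋂ i, R.image (K i) := by
  refine (R.image_mono.map_iInf_le).antisymm fun y hy ↦ ?_
  obtain ⟨x, hx⟩ : (⋂ i, K i ∩ R.preimage {y}).Nonempty := by
    refine IsCompact.nonempty_iInter_of_directed_nonempty_isCompact_isClosed _
      (hK.mono_comp (· ⊇ ·) (g := (· ∩ R.preimage {y})) fun _ _ ↦ inter_subset_inter_left _)
      (fun i ↦ ?_)
      (fun i ↦ (hcompact i).inter_right (hR y)) (fun i ↦ (hclosed i).inter (hR y))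
    obtain ⟨x, hxK, hxy⟩ := mem_iInter.1 hy i
    exact ⟨x, hxK, y, rfl, hxy⟩
  rw [← iInter_inter] at hx
  obtain ⟨hxK, _, rfl, hxy⟩ := hx
  exact ⟨x, hxK, hxy⟩

variable [CompactSpace X] {R : SetRel X X}

theorem isClosed_iterate_relImage_univ (hR : IsClosed R) (i : ℕ) :
    IsClosed (R.image^[i] univ) := by
  induction i with
  | zero => exact isClosed_univ
  | succ i ih =>
    rw [iterate_succ_apply']
    exact isClosed_relImage hR ih.isCompact

theorem isFixedPt_iInter_iterate_relImage_univ (hR : IsClosed R) :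
    IsFixedPt R.image (⋂ i, R.image^[i] univ) := by
  have hclosed := isClosed_iterate_relImage_univ hR
  have hanti := antitone_iterate_relImage_univ R
  calc R.image (⋂ i, R.image^[i] univ)
      = ⋂ i, R.image (R.image^[i] univ) :=
        relImage_iInter_of_directed (isClosed_relPreimage_singleton hR) hanti.directed_ge
          (fun i ↦ (hclosed i).isCompact) hclosed
    _ = ⋂ i, R.image^[i + 1] univ := by simp only [iterate_succ_apply']
    _ = ⋂ i, R.image^[i] univ := hanti.iInf_nat_add 1

theorem sUnion_fixedPoints_relImage_eq_iInter_iterate (hR : IsClosed R) :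
    ⋃₀ fixedPoints R.image = ⋂ i, R.image^[i] univ :=
  sSup_fixedPoints_eq_iInf_iterate_top R.image_mono (isFixedPt_iInter_iterate_relImage_univ hR)

end ClosedRelation

theorem tendsto_hausdorffEDist_iterate_relImage_univ {X : Type*} [PseudoEMetricSpace X]
    [CompactSpace X] {R : SetRel X X} (hR : IsClosed R) :
    Tendsto (fun i ↦ hausdorffEDist (R.image^[i] univ) (⋃₀ fixedPoints R.image)) atTop
      (nhds 0) := by
  have hclosed := isClosed_iterate_relImage_univ hR
  rw [sUnion_fixedPoints_relImage_eq_iInter_iterate hR]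
  exact tendsto_hausdorffEDist_iInter (antitone_iterate_relImage_univ R)
    (fun i ↦ (hclosed i).isCompact) hclosed

section LocalIFS

variable {ι X Y : Type*}

/-- The relation of a local IFS `(D j, f j)`: it relates `x` to every `f j x` with `x ∈ D j`, so
that its image map is the local Hutchinson–Barnsley operator. -/
def localIFSRel (D : ι → Set X) (f : ι → X → Y) : SetRel X Y :=
  ⋃ j, (D j).graphOn (f j)

theorem image_localIFSRel (D : ι → Set X) (f : ι → X → Y) (s : Set X) :
    (localIFSRel D f).image s = ⋃ j, f j '' (s ∩ D j) := by
  ext y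
  simp only [localIFSRel, SetRel.mem_image, mem_iUnion, mem_graphOn, mem_image, mem_inter_iff]
  grind

variable [TopologicalSpace X] [TopologicalSpace Y] [T2Space Y]

theorem isClosed_graphOn {s : Set X} {f : X → Y} (hs : IsClosed s) (hf : ContinuousOn f s) :
    IsClosed (s.graphOn f) := by
  have hpair : ContinuousOn (fun p : X × Y ↦ (f p.1, p.2)) (Prod.fst ⁻¹' s) :=
    (hf.comp continuousOn_fst (mapsTo_preimage _ _)).prodMk continuousOn_snd
  have hgraph : s.graphOn f = Prod.fst ⁻¹' s ∩ (fun p : X × Y ↦ (f p.1, p.2)) ⁻¹' diagonal Y := by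
    ext p
    simp
  rw [hgraph]
  exact hpair.preimage_isClosed_of_isClosed (hs.preimage continuous_fst) isClosed_diagonal

theorem isClosed_localIFSRel [Finite ι] {D : ι → Set X} {f : ι → X → Y} (hD : ∀ j, IsClosed (D j))
    (hf : ∀ j, ContinuousOn (f j) (D j)) : IsClosed (localIFSRel D f) :=
  isClosed_iUnion_of_finite fun j ↦ isClosed_graphOn (hD j) (hf j)

end LocalIFS

theorem iterates_tendsto_attractor_general {X : Type*} [PseudoMetricSpace X] [CompactSpace X]
    {R : SetRel X X} (hR : IsClosed R) (hne : (⋃₀ fixedPoints R.image).Nonempty) :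
    (∀ i : ℕ, (R.image^[i] univ).Nonempty ∧ IsCompact (R.image^[i] univ)) ∧
      Tendsto (fun i : ℕ ↦ hausdorffDist (R.image^[i] univ) (⋃₀ fixedPoints R.image)) atTop
        (nhds 0) := by
  refine ⟨fun i ↦ ⟨hne.mono ?_, (isClosed_iterate_relImage_univ hR i).isCompact⟩, ?_⟩
  · rw [sUnion_fixedPoints_relImage_eq_iInter_iterate hR]
    exact iInter_subset _ i
  · exact (ENNReal.tendsto_toReal ENNReal.zero_ne_top).comp
      (tendsto_hausdorffEDist_iterate_relImage_univ hR)

/-- If the local attractor `A = ⋃ {B : F B = B}` of a local IFS on a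
compact metric space is nonempty, then the iterates `F^[i] X` are nonempty compact sets
converging to `A` in the Hausdorff distance. -/
theorem iterates_tendsto_attractor {X : Type*} [MetricSpace X] [CompactSpace X]
    {n : ℕ} (hn : 0 < n)
    (Xs : Fin n → Set X) (hXs : ∀ j, IsClosed (Xs j))
    (f : Fin n → X → X) (hf : ∀ j, ContinuousOn (f j) (Xs j))
    (F : Set X → Set X) (hF : ∀ B, F B = ⋃ j, f j '' (B ∩ Xs j))
    (A : Set X) (hA : A = ⋃₀ {B : Set X | F B = B}) (hAne : A.Nonempty) :
    (∀ i : ℕ, (F^[i] (Set.univ : Set X)).Nonempty ∧ IsCompact (F^[i] (Set.univ : Set X))) ∧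
      Tendsto (fun i : ℕ => Metric.hausdorffDist (F^[i] (Set.univ : Set X)) A)
        atTop (nhds 0) := by
  obtain rfl : F = (localIFSRel Xs f).image := funext fun B ↦ by rw [hF, image_localIFSRel]
  subst hA
  exact iterates_tendsto_attractor_general (isClosed_localIFSRel hXs hf) hAne
end

section
/- Let a local IFS on a compact metric space X be contractive, i.e., each f_j satisfies d(f_j(x), f_j(y)) ≤ λ_j d(x,y) for all x,y ∈ X_j with λ_j < 1. Then for every b in the code space Σ, the nested intersection ⋂_{k ≥ 1} V_b(k) is a singleton; i.e., there is exactly one point x ∈ X with x ∈ V_b(k) for all k ≥ 1. -/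
/-- The cylinder sets of a local IFS: `cylinder f Xs k b` is the set
`V_b(k+1) = f_{b 0}(⋯ f_{b k}(X_{b k}) ⋯ ∩ X_{b 0})` of the left-infinite word
encoded by `b : ℕ → Fin n` (so `b (k-1)` is the symbol `b_{-k}`). -/
def cylinder {X : Type*} {n : ℕ} (f : Fin n → X → X) (Xs : Fin n → Set X) :
    ℕ → (ℕ → Fin n) → Set X
  | 0, b => f (b 0) '' Xs (b 0)
  | k + 1, b => f (b 0) '' (cylinder f Xs k (fun j => b (j + 1)) ∩ Xs (b 0))

/-- The code space of a local IFS: the set of left-infinite words all of whose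
cylinder sets are nonempty. -/
def codeSpace {X : Type*} {n : ℕ} (f : Fin n → X → X) (Xs : Fin n → Set X) :
    Set (ℕ → Fin n) :=
  {b | ∀ k : ℕ, (cylinder f Xs k b).Nonempty}

/-!
Since `V_b(k+1)` is the image of a part of `V_{σb}(k)` under a contraction, the diameters of the
cylinder sets decay geometrically in `k`, at the largest of the finitely many contraction ratios.
The cylinder sets of `b` are also compact, nested and nonempty, so Cantor's intersection theorem
gives a common point, and the vanishing diameters leave room for only one.
-/

open Filter Metric Topology
open scoped NNReal ENNReal

theorem ediam_image_le_of_lipschitzOnWith {X Y : Type*} [PseudoEMetricSpace X]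
    [PseudoEMetricSpace Y] {c : ℝ≥0} {g : X → Y} {s t : Set X} (hg : LipschitzOnWith c g s)
    (hts : t ⊆ s) : ediam (g '' t) ≤ c * ediam t := by
  simpa only [NNReal.coe_one, ENNReal.rpow_one] using
    (holderOnWith_one.mpr hg).ediam_image_le_of_subset hts

theorem existsUnique_forall_mem_of_tendsto_ediam_zero {X : Type*} [EMetricSpace X]
    {s : ℕ → Set X} (hs : Antitone s) (hne : ∀ k, (s k).Nonempty)
    (hcomp : ∀ k, IsCompact (s k)) (hdiam : Tendsto (fun k => ediam (s k)) atTop (𝓝 0)) :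
    ∃! x, ∀ k, x ∈ s k := by
  obtain ⟨x, hx⟩ := IsCompact.nonempty_iInter_of_directed_nonempty_isCompact_isClosed
    s hs.directed_ge hne hcomp fun k => (hcomp k).isClosed
  rw [Set.mem_iInter] at hx
  refine ⟨x, hx, fun y hy => ?_⟩
  have hedist : edist y x ≤ 0 :=
    ge_of_tendsto' hdiam fun k => edist_le_ediam_of_mem (hy k) (hx k)
  exact edist_le_zero.mp hedist

section Cylinder

variable {X : Type*} {n : ℕ}

theorem cylinder_succ_subset (f : Fin n → X → X) (Xs : Fin n → Set X) (k : ℕ)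
    (b : ℕ → Fin n) : cylinder f Xs (k + 1) b ⊆ cylinder f Xs k b := by
  induction k generalizing b with
  | zero => exact Set.image_mono Set.inter_subset_right
  | succ k ih => exact Set.image_mono (Set.inter_subset_inter_left _ (ih _))

theorem antitone_cylinder (f : Fin n → X → X) (Xs : Fin n → Set X) (b : ℕ → Fin n) :
    Antitone fun k => cylinder f Xs k b :=
  antitone_nat_of_succ_le fun k => cylinder_succ_subset f Xs k b

variable {f : Fin n → X → X} {Xs : Fin n → Set X}

theorem isCompact_cylinder [TopologicalSpace X] [T2Space X] (hXs : ∀ j, IsCompact (Xs j))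
    (hf : ∀ j, ContinuousOn (f j) (Xs j)) (k : ℕ) (b : ℕ → Fin n) :
    IsCompact (cylinder f Xs k b) := by
  induction k generalizing b with
  | zero => exact (hXs _).image_of_continuousOn (hf _)
  | succ k ih =>
    exact ((ih _).inter (hXs _)).image_of_continuousOn ((hf _).mono Set.inter_subset_right)

theorem ediam_cylinder_le [PseudoEMetricSpace X] {c : ℝ≥0}
    (hf : ∀ j, LipschitzOnWith c (f j) (Xs j)) (k : ℕ) (b : ℕ → Fin n) :
    ediam (cylinder f Xs k b) ≤ (c : ℝ≥0∞) ^ (k + 1) * ediam (⋃ j, Xs j) := by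
  induction k generalizing b with
  | zero =>
    calc ediam (f (b 0) '' Xs (b 0))
        ≤ c * ediam (Xs (b 0)) := ediam_image_le_of_lipschitzOnWith (hf (b 0)) subset_rfl
      _ ≤ c * ediam (⋃ j, Xs j) := by gcongr; exact Set.subset_iUnion Xs (b 0)
      _ = (c : ℝ≥0∞) ^ (0 + 1) * ediam (⋃ j, Xs j) := by rw [zero_add, pow_one]
  | succ k ih =>
    let σb : ℕ → Fin n := fun j => b (j + 1)
    calc ediam (f (b 0) '' (cylinder f Xs k σb ∩ Xs (b 0)))
        ≤ c * ediam (cylinder f Xs k σb ∩ Xs (b 0)) :=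
          ediam_image_le_of_lipschitzOnWith (hf (b 0)) Set.inter_subset_right
      _ ≤ c * ediam (cylinder f Xs k σb) := by gcongr; exact Set.inter_subset_left
      _ ≤ c * ((c : ℝ≥0∞) ^ (k + 1) * ediam (⋃ j, Xs j)) := by gcongr; exact ih σb
      _ = (c : ℝ≥0∞) ^ (k + 1 + 1) * ediam (⋃ j, Xs j) := by rw [← mul_assoc, ← pow_succ']

theorem tendsto_ediam_cylinder [PseudoEMetricSpace X] {c : ℝ≥0} (hc : c < 1)
    (hf : ∀ j, LipschitzOnWith c (f j) (Xs j)) (hdiam : ediam (⋃ j, Xs j) ≠ ∞)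
    (b : ℕ → Fin n) :
    Tendsto (fun k => ediam (cylinder f Xs k b)) atTop (𝓝 0) := by
  have hpow : Tendsto (fun k => (c : ℝ≥0∞) ^ (k + 1)) atTop (𝓝 0) :=
    (ENNReal.tendsto_pow_atTop_nhds_zero_of_lt_one (mod_cast hc)).comp (tendsto_add_atTop_nat 1)
  have hbound : Tendsto (fun k => (c : ℝ≥0∞) ^ (k + 1) * ediam (⋃ j, Xs j)) atTop (𝓝 0) := by
    simpa only [zero_mul] using ENNReal.Tendsto.mul_const hpow (.inr hdiam)
  exact tendsto_of_tendsto_of_tendsto_of_le_of_le tendsto_const_nhds hbound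
    (fun _ => zero_le) fun k => ediam_cylinder_le hf k b

end Cylinder

theorem cylinder_iInter_singleton_general {X : Type*} [MetricSpace X] {n : ℕ}
    {f : Fin n → X → X} {Xs : Fin n → Set X} (hXs : ∀ j, IsCompact (Xs j))
    {K : Fin n → ℝ≥0} (hK : ∀ j, K j < 1) (hf : ∀ j, LipschitzOnWith (K j) (f j) (Xs j))
    {b : ℕ → Fin n} (hb : b ∈ codeSpace f Xs) :
    ∃! x : X, ∀ k : ℕ, x ∈ cylinder f Xs k b := by
  let c : ℝ≥0 := Finset.univ.sup K
  have hc : c < 1 := (Finset.sup_lt_iff one_pos).mpr fun j _ => hK j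
  have hfc (j : Fin n) : LipschitzOnWith c (f j) (Xs j) :=
    (hf j).weaken (Finset.le_sup (Finset.mem_univ j))
  have hdiam : ediam (⋃ j, Xs j) ≠ ∞ := (isCompact_iUnion hXs).isBounded.ediam_ne_top
  exact existsUnique_forall_mem_of_tendsto_ediam_zero (antitone_cylinder f Xs b) hb
    (fun k => isCompact_cylinder hXs (fun j => (hf j).continuousOn) k b)
    (tendsto_ediam_cylinder hc hfc hdiam b)

/-- For a contractive local IFS on a compact metric space, for every
word `b` in the code space the nested intersection `⋂_{k ≥ 1} V_b(k)` is a singleton: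
there is exactly one point lying in all cylinder sets of `b`. -/
theorem cylinder_iInter_singleton {X : Type*} [MetricSpace X] [CompactSpace X]
    {n : ℕ} (hn : 0 < n)
    (Xs : Fin n → Set X) (hXs : ∀ j, IsClosed (Xs j))
    (f : Fin n → X → X)
    (lam : Fin n → ℝ) (hlam0 : ∀ j, 0 ≤ lam j) (hlam1 : ∀ j, lam j < 1)
    (hcontr : ∀ j, ∀ x ∈ Xs j, ∀ y ∈ Xs j, dist (f j x) (f j y) ≤ lam j * dist x y)
    (b : ℕ → Fin n) (hb : b ∈ codeSpace f Xs) :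
    ∃! x : X, ∀ k : ℕ, x ∈ cylinder f Xs k b :=
  cylinder_iInter_singleton_general (fun j => (hXs j).isCompact) (K := fun j => ⟨lam j, hlam0 j⟩)
    hlam1 (fun j => .of_dist_le_mul (hcontr j)) hb
end

section
/- Let a local IFS on a compact metric space X have local attractor A := ⋃{B ⊆ X : F(B) = B}. Then: (1) a point x ∈ X has an infinite orbit if and only if for every ℓ ≥ 1 there exists a finite admissible itinerary of length ℓ from x; (2) if A ≠ ∅, then A^∞ := {x ∈ A : x has an infinite orbit} is a compact subset of X. -/
/-- The orbit of a point `x` of a local IFS directed by the itinerary `a`: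
`orbitSeq f x a 0 = x` and `orbitSeq f x a (i+1) = f (a i) (orbitSeq f x a i)`. -/
def orbitSeq {X : Type*} {n : ℕ} (f : Fin n → X → X) (x : X) (a : ℕ → Fin n) : ℕ → X
  | 0 => x
  | i + 1 => f (a i) (orbitSeq f x a i)

/-!
Both sets in play are greatest fixed points of monotone operators on the lattice `Set X`: the local
attractor for the operator `F`, and the set of points with an infinite orbit for
`P B = ⋃ j, Xs j ∩ f j ⁻¹' B`. Since there are finitely many maps, `P` commutes with decreasing
intersections, so by Kleene's theorem its greatest fixed point is `⋂ ℓ, P^[ℓ] univ`, the points with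
admissible itineraries of every finite length. Moreover `F` and `P` send closed sets to closed sets,
and the greatest fixed point `G` of such an operator `Φ` is closed: from `G = Φ G ⊆ Φ (closure G)`
one gets `closure G ⊆ Φ (closure G)`, hence `closure G ⊆ G`.
-/

open Set OmegaCompletePartialOrder

theorem sSup_fixedPoints_eq_gfp {L : Type*} [CompleteLattice L] (Φ : L →o L) :
    sSup (Function.fixedPoints Φ) = Φ.gfp :=
  Φ.isGreatest_gfp.isLUB.sSup_eq

theorem isClosed_gfp {X : Type*} [TopologicalSpace X] (Φ : Set X →o Set X)
    (hΦ : ∀ C, IsClosed C → IsClosed (Φ C)) : IsClosed Φ.gfp := by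
  have gfp_subset : Φ.gfp ⊆ Φ (closure Φ.gfp) :=
    Φ.map_gfp.superset.trans (Φ.monotone subset_closure)
  exact isClosed_of_closure_subset
    (Φ.le_gfp (closure_minimal gfp_subset (hΦ _ isClosed_closure)))

section Operators

variable {ι X : Type*} (Xs : ι → Set X) (f : ι → X → X)

/-- The local Hutchinson–Barnsley operator of the maps `f j` with domains `Xs j`, as a monotone
map of the lattice `Set X`; its greatest fixed point is the local attractor. -/
def hutchinsonBarnsley : Set X →o Set X where
  toFun B := ⋃ j, f j '' (B ∩ Xs j)
  monotone' _ _ hBC := iUnion_mono fun _ => image_mono (inter_subset_inter_left _ hBC)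

/-- The set of points that some `f j`, applied within its domain `Xs j`, sends into `B`, as a
monotone map of the lattice `Set X`; its greatest fixed point consists of the points with an
infinite orbit. -/
def admissiblePreimage : Set X →o Set X where
  toFun B := ⋃ j, Xs j ∩ f j ⁻¹' B
  monotone' _ _ hBC := iUnion_mono fun _ => inter_subset_inter_right _ (preimage_mono hBC)

variable {Xs f}

theorem mem_admissiblePreimage {B : Set X} {x : X} :
    x ∈ admissiblePreimage Xs f B ↔ ∃ j, x ∈ Xs j ∧ f j x ∈ B :=
  mem_iUnion

theorem admissiblePreimage_iInter_of_antitone [Finite ι] {κ : Type*} [Preorder κ]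
    [IsDirectedOrder κ] [Nonempty κ] {S : κ → Set X} (hS : Antitone S) :
    admissiblePreimage Xs f (⋂ k, S k) = ⋂ k, admissiblePreimage Xs f (S k) := by
  change (⋃ j, Xs j ∩ f j ⁻¹' ⋂ k, S k) = ⋂ k, ⋃ j, Xs j ∩ f j ⁻¹' S k
  simp only [preimage_iInter, inter_iInter]
  exact (iInter_iUnion_of_antitone (s := fun j k => Xs j ∩ f j ⁻¹' S k) fun _ _ _ h =>
    inter_subset_inter_right _ (preimage_mono (hS h))).symm

theorem gfp_admissiblePreimage_eq_iInter_iterate [Finite ι] :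
    (admissiblePreimage Xs f).gfp = ⋂ ℓ : ℕ, (admissiblePreimage Xs f)^[ℓ] univ :=
  fixedPoints.gfp_eq_sInf_iterate _ <|
    ωScottContinuous.of_monotone_map_ωSup
      ⟨(admissiblePreimage Xs f).dual.monotone, fun S =>
        admissiblePreimage_iInter_of_antitone (S := fun ℓ => OrderDual.ofDual (S ℓ)) S.monotone⟩

variable [TopologicalSpace X] [Finite ι]

theorem isClosed_admissiblePreimage (hXs : ∀ j, IsClosed (Xs j))
    (hf : ∀ j, ContinuousOn (f j) (Xs j)) {C : Set X} (hC : IsClosed C) :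
    IsClosed (admissiblePreimage Xs f C) :=
  isClosed_iUnion_of_finite fun j => (hf j).preimage_isClosed_of_isClosed (hXs j) hC

theorem isClosed_hutchinsonBarnsley [T2Space X] (hXs : ∀ j, IsCompact (Xs j))
    (hf : ∀ j, ContinuousOn (f j) (Xs j)) {C : Set X} (hC : IsClosed C) :
    IsClosed (hutchinsonBarnsley Xs f C) :=
  isClosed_iUnion_of_finite fun j =>
    (((hXs j).inter_left hC).image_of_continuousOn ((hf j).mono inter_subset_right)).isClosed

end Operators

section Orbits

variable {X : Type*} {n : ℕ} {Xs : Fin n → Set X} {f : Fin n → X → X} {x : X}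

theorem orbitSeq_succ_eq_tail (f : Fin n → X → X) (x : X) (a : ℕ → Fin n) (i : ℕ) :
    orbitSeq f x a (i + 1) = orbitSeq f (f (a 0) x) (fun k => a (k + 1)) i := by
  induction i with
  | zero => rfl
  | succ i ih => exact congrArg (f (a (i + 1))) ih

theorem mem_iterate_admissiblePreimage {a : ℕ → Fin n} {ℓ : ℕ}
    (ha : ∀ i < ℓ, orbitSeq f x a i ∈ Xs (a i)) :
    x ∈ (admissiblePreimage Xs f)^[ℓ] univ := by
  induction ℓ generalizing x a with
  | zero => exact mem_univ x
  | succ ℓ ih =>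
    rw [Function.iterate_succ_apply']
    refine mem_admissiblePreimage.2
      ⟨a 0, ha 0 ℓ.succ_pos, ih (a := fun k => a (k + 1)) fun i hi => ?_⟩
    exact orbitSeq_succ_eq_tail f x a i ▸ ha (i + 1) (Nat.succ_lt_succ hi)

variable (Xs f) in
/-- The points from which some infinite itinerary is admissible. Intersecting this set with the
local attractor `A` gives `A^∞`. -/
def infiniteOrbitSet : Set X :=
  {x | ∃ a : ℕ → Fin n, ∀ i, orbitSeq f x a i ∈ Xs (a i)}

theorem infiniteOrbitSet_subset_admissiblePreimage :
    infiniteOrbitSet Xs f ⊆ admissiblePreimage Xs f (infiniteOrbitSet Xs f) :=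
  fun x ⟨a, ha⟩ => mem_admissiblePreimage.2 ⟨a 0, ha 0, fun k => a (k + 1),
    fun i => orbitSeq_succ_eq_tail f x a i ▸ ha (i + 1)⟩

theorem subset_infiniteOrbitSet {S : Set X} (hS : S ⊆ admissiblePreimage Xs f S) :
    S ⊆ infiniteOrbitSet Xs f := by
  intro x hx
  choose g hgXs hgS using fun y : S => mem_admissiblePreimage.1 (hS y.2)
  let y (i : ℕ) : S := (fun z : S => ⟨f (g z) z, hgS z⟩)^[i] ⟨x, hx⟩
  have orbit_eq (i : ℕ) : orbitSeq f x (fun k => g (y k)) i = y i := by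
    induction i with
    | zero => rfl
    | succ i ih => simp only [orbitSeq, ih, y, Function.iterate_succ_apply']
  exact ⟨fun k => g (y k), fun i => (orbit_eq i).symm ▸ hgXs (y i)⟩

theorem infiniteOrbitSet_eq_gfp : infiniteOrbitSet Xs f = (admissiblePreimage Xs f).gfp :=
  Subset.antisymm ((admissiblePreimage Xs f).le_gfp infiniteOrbitSet_subset_admissiblePreimage)
    (subset_infiniteOrbitSet (admissiblePreimage Xs f).map_gfp.superset)

theorem mem_infiniteOrbitSet_iff_forall_finite : x ∈ infiniteOrbitSet Xs f ↔
    ∀ ℓ : ℕ, 1 ≤ ℓ → ∃ a : ℕ → Fin n, ∀ i < ℓ, orbitSeq f x a i ∈ Xs (a i) := by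
  refine ⟨fun ⟨a, ha⟩ _ _ => ⟨a, fun i _ => ha i⟩, fun h => ?_⟩
  rw [infiniteOrbitSet_eq_gfp, gfp_admissiblePreimage_eq_iInter_iterate, mem_iInter]
  rintro (_ | ℓ)
  · exact mem_univ x
  · obtain ⟨a, ha⟩ := h (ℓ + 1) ℓ.succ_pos
    exact mem_iterate_admissiblePreimage ha

theorem infiniteOrbitSet_subset_iUnion : infiniteOrbitSet Xs f ⊆ ⋃ j, Xs j :=
  fun _ ⟨a, ha⟩ => mem_iUnion.2 ⟨a 0, ha 0⟩

theorem isClosed_infiniteOrbitSet [TopologicalSpace X] (hXs : ∀ j, IsClosed (Xs j))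
    (hf : ∀ j, ContinuousOn (f j) (Xs j)) : IsClosed (infiniteOrbitSet Xs f) :=
  infiniteOrbitSet_eq_gfp ▸ isClosed_gfp _ fun _ => isClosed_admissiblePreimage hXs hf

theorem isCompact_infiniteOrbitSet [TopologicalSpace X] [T2Space X]
    (hXs : ∀ j, IsCompact (Xs j)) (hf : ∀ j, ContinuousOn (f j) (Xs j)) :
    IsCompact (infiniteOrbitSet Xs f) :=
  (isCompact_iUnion hXs).of_isClosed_subset
    (isClosed_infiniteOrbitSet (fun j => (hXs j).isClosed) hf) infiniteOrbitSet_subset_iUnion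

end Orbits

theorem infinite_orbit_iff_and_Ainf_compact_general {X : Type*} [TopologicalSpace X] [T2Space X]
    {n : ℕ} (Xs : Fin n → Set X) (hXs : ∀ j, IsCompact (Xs j))
    (f : Fin n → X → X) (hf : ∀ j, ContinuousOn (f j) (Xs j))
    (F : Set X → Set X) (hF : ∀ B, F B = ⋃ j, f j '' (B ∩ Xs j))
    (A : Set X) (hA : A = ⋃₀ {B : Set X | F B = B}) :
    (∀ x : X,
      (∃ a : ℕ → Fin n, ∀ i : ℕ, orbitSeq f x a i ∈ Xs (a i)) ↔
        ∀ ℓ : ℕ, 1 ≤ ℓ → ∃ a : ℕ → Fin n, ∀ i < ℓ, orbitSeq f x a i ∈ Xs (a i)) ∧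
      IsCompact {x ∈ A | ∃ a : ℕ → Fin n, ∀ i : ℕ, orbitSeq f x a i ∈ Xs (a i)} := by
  refine ⟨fun _ => mem_infiniteOrbitSet_iff_forall_finite, ?_⟩
  obtain rfl : F = hutchinsonBarnsley Xs f := funext hF
  have hA_gfp : A = (hutchinsonBarnsley Xs f).gfp := hA.trans (sSup_fixedPoints_eq_gfp _)
  have hA_closed : IsClosed A :=
    hA_gfp ▸ isClosed_gfp _ fun _ => isClosed_hutchinsonBarnsley hXs hf
  exact (isCompact_infiniteOrbitSet hXs hf).inter_left hA_closed

/-- For a local IFS on a compact metric space with local attractor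
`A = ⋃ {B : F B = B}`: (1) a point `x` has an infinite orbit iff for every `ℓ ≥ 1`
there is a finite admissible itinerary of length `ℓ` from `x`; (2) if `A ≠ ∅` then
`A^∞ = {x ∈ A : x has an infinite orbit}` is compact. -/
theorem infinite_orbit_iff_and_Ainf_compact {X : Type*} [MetricSpace X] [CompactSpace X]
    {n : ℕ} (hn : 0 < n)
    (Xs : Fin n → Set X) (hXs : ∀ j, IsClosed (Xs j))
    (f : Fin n → X → X) (hf : ∀ j, ContinuousOn (f j) (Xs j))
    (F : Set X → Set X) (hF : ∀ B, F B = ⋃ j, f j '' (B ∩ Xs j))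
    (A : Set X) (hA : A = ⋃₀ {B : Set X | F B = B}) :
    (∀ x : X,
      (∃ a : ℕ → Fin n, ∀ i : ℕ, orbitSeq f x a i ∈ Xs (a i)) ↔
        ∀ ℓ : ℕ, 1 ≤ ℓ → ∃ a : ℕ → Fin n, ∀ i < ℓ, orbitSeq f x a i ∈ Xs (a i)) ∧
      (A.Nonempty →
        IsCompact {x ∈ A | ∃ a : ℕ → Fin n, ∀ i : ℕ, orbitSeq f x a i ∈ Xs (a i)}) := by
  obtain ⟨orbit_iff, compact⟩ :=
    infinite_orbit_iff_and_Ainf_compact_general Xs (fun j => (hXs j).isCompact) f hf F hF A hA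
  exact ⟨orbit_iff, fun _ => compact⟩
end
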